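/- Suppose sup_{z₁,z₂∈Z} V(z₁, z₂) ≤ Ω_Z² and L_H > 0, and set α_t = 2/(t+1) and γ_t = μt/(2(L_G + L_H t)) in the AMP method. Then for every t ≥ 1 and every u ∈ Z, Q(w_{t+1}^{ag}, u) ≤ (4L_G/(μ t(t+1)) + 4L_H/(μ t)) Ω_Z². -/

import Mathlib

/-!
`V (r t) u` serves as an energy. Two consecutive prox steps from the same
center, the second of which determines the new center, decrease it up to an error governed by
`(γ L_H)² / μ`, caused by evaluating `H` at the old point in the first step. Averaging with weight
`α` costs a further `L_G α γ` through the smoothness of `G`. When the modulus `μ` of `ω` absorbs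
both errors, one obtains
`Q (wag (t + 1), u) ≤ (1 - α) Q (wag t, u) + (α / γ) (V (r t) u - V (r (t + 1)) u)`,
and for a bound `B` on the energies the invariant
`Q (wag (t + 1), u) + (α / γ) V (r (t + 1)) u ≤ (α / γ) B` propagates as long as
`α / γ` never drops below `1 - α` times its previous value.
-/

section AcceleratedMirrorProx

variable {E : Type*} [NormedAddCommGroup E] [NormedSpace ℝ E]
  {Z : Set E} {ω J G φ : E → ℝ} {Dω DG H : E → E →L[ℝ] ℝ} {μ L LG LH : ℝ}

/-- The Bregman divergence `V(z, u)` of `ω`, where `Dω` is the gradient field of `ω`. It is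
passed explicitly because a derivative within a lower-dimensional set `Z` is not unique. -/
def bregmanDiv (ω : E → ℝ) (Dω : E → E →L[ℝ] ℝ) (z u : E) : ℝ :=
  ω u - ω z - Dω z (u - z)

/-- `ω` is a distance-generating function on `Z` of modulus `μ`: it is differentiable within `Z`
with gradient field `Dω`, and strong convexity is encoded as the quadratic lower bound on its
Bregman divergence. -/
structure IsDistanceGenerating (Z : Set E) (ω : E → ℝ) (Dω : E → E →L[ℝ] ℝ) (μ : ℝ) : Prop where
  hasFDerivWithinAt : ∀ z ∈ Z, HasFDerivWithinAt ω (Dω z) Z z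
  le_bregmanDiv : ∀ z ∈ Z, ∀ u ∈ Z, μ / 2 * ‖u - z‖ ^ 2 ≤ bregmanDiv ω Dω z u

/-- `p` is a value of the prox-mapping `P_z^J(η)`. It is a relation, so that no existence or
uniqueness of the minimizer has to be assumed. -/
def IsProxPoint (Z : Set E) (ω : E → ℝ) (Dω : E → E →L[ℝ] ℝ) (J : E → ℝ) (z : E)
    (η : E →L[ℝ] ℝ) (p : E) : Prop :=
  p ∈ Z ∧ IsMinOn (fun u => η (u - z) + bregmanDiv ω Dω z u + J u) Z p

/-- `G` is convex and `L`-smooth on `Z` with gradient field `DG`, encoded by the affine lower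
bound and the quadratic upper bound at every point of `Z`. -/
structure IsSmoothConvexOn (Z : Set E) (G : E → ℝ) (DG : E → E →L[ℝ] ℝ) (L : ℝ) : Prop where
  add_le : ∀ v ∈ Z, ∀ x ∈ Z, G x + DG x (v - x) ≤ G v
  le_add_sq : ∀ v ∈ Z, ∀ x ∈ Z, G v ≤ G x + DG x (v - x) + L / 2 * ‖v - x‖ ^ 2

/-- The gap `Q(a, b)` of the composite variational inequality for `∇G + H + ∂J`. -/
def viGap (G : E → ℝ) (H : E → E →L[ℝ] ℝ) (J : E → ℝ) (a b : E) : ℝ :=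
  G a - G b + H b (a - b) + J a - J b

/-- `r`, `w`, `wag`, `wmd` are iterates of the accelerated mirror-prox method with step sizes `α`
and `γ`. As in the paper, indices start at `1`; `w 1` never enters the iteration. -/
structure IsAMPSequence (Z : Set E) (ω : E → ℝ) (Dω : E → E →L[ℝ] ℝ) (J : E → ℝ)
    (DG H : E → E →L[ℝ] ℝ) (α γ : ℕ → ℝ) (r w wag wmd : ℕ → E) : Prop where
  r_one_mem : r 1 ∈ Z
  wag_one : wag 1 = r 1
  wmd_eq : ∀ t ≥ 1, wmd t = (1 - α t) • wag t + α t • r t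
  isProxPoint_w : ∀ t ≥ 1, IsProxPoint Z ω Dω (fun u => γ t * J u) (r t)
    (γ t • (H (r t) + DG (wmd t))) (w (t + 1))
  isProxPoint_r : ∀ t ≥ 1, IsProxPoint Z ω Dω (fun u => γ t * J u) (r t)
    (γ t • (H (w (t + 1)) + DG (wmd t))) (r (t + 1))
  wag_succ : ∀ t ≥ 1, wag (t + 1) = (1 - α t) • wag t + α t • w (t + 1)

theorem bregmanDiv_sub_bregmanDiv_sub_bregmanDiv (z p u : E) :
    bregmanDiv ω Dω z u - bregmanDiv ω Dω z p - bregmanDiv ω Dω p u = (Dω p - Dω z) (u - p) := by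
  simp only [bregmanDiv, map_sub, sub_apply]
  ring

theorem IsDistanceGenerating.bregmanDiv_nonneg (hω : IsDistanceGenerating Z ω Dω μ) (hμ : 0 ≤ μ)
    {z u : E} (hz : z ∈ Z) (hu : u ∈ Z) : 0 ≤ bregmanDiv ω Dω z u :=
  (by positivity : 0 ≤ μ / 2 * ‖u - z‖ ^ 2).trans (hω.le_bregmanDiv z hz u hu)

/-- Fermat's rule on the epigraph of `φ`, where the objective becomes differentiable. -/
theorem le_fderiv_add_of_isMinOn_add {f : E → ℝ} {f' : E →L[ℝ] ℝ} {p u : E}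
    (hφ : ConvexOn ℝ Z φ) (hf : HasFDerivWithinAt f f' Z p)
    (hmin : IsMinOn (fun x => f x + φ x) Z p) (hp : p ∈ Z) (hu : u ∈ Z) :
    φ p ≤ f' (u - p) + φ u := by
  let epi : Set (E × ℝ) := {x | x.1 ∈ Z ∧ φ x.1 ≤ x.2}
  have hp_epi : (p, φ p) ∈ epi := ⟨hp, le_rfl⟩
  have hu_epi : (u, φ u) ∈ epi := ⟨hu, le_rfl⟩
  have hmin_epi : IsMinOn (fun x : E × ℝ => f x.1 + x.2) epi (p, φ p) := fun x hx =>
    (hmin hx.1).trans (add_le_add_right hx.2 _)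
  have hderiv : HasFDerivWithinAt (fun x : E × ℝ => f x.1 + x.2)
      (f'.comp (.fst ℝ E ℝ) + .snd ℝ E ℝ) epi (p, φ p) :=
    (hf.comp (p, φ p) hasFDerivWithinAt_fst fun _ hx => hx.1).add hasFDerivWithinAt_snd
  have hnonneg : 0 ≤ f' (u - p) + (φ u - φ p) :=
    hmin_epi.localize.hasFDerivWithinAt_nonneg hderiv
      (sub_mem_posTangentConeAt_of_segment_subset (hφ.convex_epigraph.segment_subset hp_epi hu_epi))
  linarith

theorem IsProxPoint.three_point_le {z p u : E} {η : E →L[ℝ] ℝ} (hJ : ConvexOn ℝ Z J)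
    (hp : IsProxPoint Z ω Dω J z η p) (hω : HasFDerivWithinAt ω (Dω p) Z p) (hu : u ∈ Z) :
    η (p - u) + J p - J u
      ≤ bregmanDiv ω Dω z u - bregmanDiv ω Dω z p - bregmanDiv ω Dω p u := by
  have hderiv : HasFDerivWithinAt (fun x => η (x - z) + bregmanDiv ω Dω z x)
      (η + (Dω p - Dω z)) Z p := by
    have hlin (ℓ : E →L[ℝ] ℝ) : HasFDerivWithinAt (fun x => ℓ (x - z)) ℓ Z p :=
      ℓ.hasFDerivWithinAt.comp p ((hasFDerivWithinAt_id p Z).sub_const z) (Set.mapsTo_univ _ _)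
    exact (hlin η).add ((hω.sub_const (ω z)).sub (hlin (Dω z)))
  have hopt := le_fderiv_add_of_isMinOn_add hJ hderiv hp.2 hp.1 hu
  rw [bregmanDiv_sub_bregmanDiv_sub_bregmanDiv, ← neg_sub u p, map_neg]
  rw [add_apply] at hopt
  linarith

theorem IsProxPoint.extragradient_le {z p q u : E} {η ϑ : E →L[ℝ] ℝ} (hJ : ConvexOn ℝ Z J)
    (hω : ∀ x ∈ Z, HasFDerivWithinAt ω (Dω x) Z x) (hp : IsProxPoint Z ω Dω J z η p)
    (hq : IsProxPoint Z ω Dω J z ϑ q) (hu : u ∈ Z) :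
    ϑ (p - u) + J p - J u ≤ bregmanDiv ω Dω z u - bregmanDiv ω Dω q u
      - bregmanDiv ω Dω z p - bregmanDiv ω Dω p q + (ϑ - η) (p - q) := by
  have hpq := hp.three_point_le hJ (hω p hp.1) hq.1
  have hqu := hq.three_point_le hJ (hω q hq.1) hu
  have hsplit : ϑ (p - u) = η (p - q) + ϑ (q - u) + (ϑ - η) (p - q) := by
    simp only [map_sub, sub_apply]
    ring
  linarith

theorem IsProxPoint.extragradient_le_of_norm_sub_le {z p q u : E} {η ϑ : E →L[ℝ] ℝ} {M : ℝ}
    (hJ : ConvexOn ℝ Z J) (hω : IsDistanceGenerating Z ω Dω μ) (hμ : 0 < μ) (hz : z ∈ Z)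
    (hp : IsProxPoint Z ω Dω J z η p) (hq : IsProxPoint Z ω Dω J z ϑ q) (hu : u ∈ Z)
    (hM : ‖ϑ - η‖ ≤ M * ‖p - z‖) :
    ϑ (p - u) + J p - J u ≤ bregmanDiv ω Dω z u - bregmanDiv ω Dω q u
      - (μ - M ^ 2 / μ) / 2 * ‖p - z‖ ^ 2 := by
  have hpert : (ϑ - η) (p - q) ≤ M * ‖p - z‖ * ‖q - p‖ := by
    rw [norm_sub_rev q p]
    exact (le_abs_self _).trans ((ϑ - η).le_of_opNorm_le hM (p - q))
  have hyoung : M * ‖p - z‖ * ‖q - p‖ ≤ M ^ 2 / μ / 2 * ‖p - z‖ ^ 2 + μ / 2 * ‖q - p‖ ^ 2 := by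
    have hsq : 0 ≤ (M * ‖p - z‖ - μ * ‖q - p‖) ^ 2 / (2 * μ) := by positivity
    have hexpand : (M * ‖p - z‖ - μ * ‖q - p‖) ^ 2 / (2 * μ)
        = M ^ 2 / μ / 2 * ‖p - z‖ ^ 2 + μ / 2 * ‖q - p‖ ^ 2 - M * ‖p - z‖ * ‖q - p‖ := by
      field_simp
      ring
    linarith
  linarith [hp.extragradient_le hJ hω.hasFDerivWithinAt hq hu, hω.le_bregmanDiv z hz p hp.1,
    hω.le_bregmanDiv p hp.1 q hq.1]

theorem IsSmoothConvexOn.le_convexComb (hG : IsSmoothConvexOn Z G DG L) (hZ : Convex ℝ Z)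
    {x y z u : E} {a : ℝ} (ha : a ∈ Set.Icc 0 1) (hx : x ∈ Z) (hy : y ∈ Z) (hz : z ∈ Z)
    (hu : u ∈ Z) :
    G ((1 - a) • x + a • y) ≤ (1 - a) * G x
      + a * (G u + DG ((1 - a) • x + a • z) (y - u) + L * a / 2 * ‖y - z‖ ^ 2) := by
  have hmem {v : E} (hv : v ∈ Z) : (1 - a) • x + a • v ∈ Z :=
    hZ hx hv (sub_nonneg.2 ha.2) ha.1 (sub_add_cancel 1 a)
  have hm := hmem hz
  have hdiff : ((1 - a) • x + a • y) - ((1 - a) • x + a • z) = a • (y - z) := by module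
  have hupper := hG.le_add_sq _ (hmem hy) _ hm
  rw [hdiff, norm_smul, Real.norm_of_nonneg ha.1] at hupper
  have hsplit : a • (y - z) = (1 - a) • (x - ((1 - a) • x + a • z))
      + a • ((u - ((1 - a) • x + a • z)) + (y - u)) := by module
  rw [hsplit] at hupper
  generalize (1 - a) • x + a • z = m at *
  simp only [map_add, map_smul, smul_eq_mul] at hupper
  have hlower_x := mul_le_mul_of_nonneg_left (hG.add_le x hx m hm) (sub_nonneg.2 ha.2)
  have hlower_u := mul_le_mul_of_nonneg_left (hG.add_le u hu m hm) ha.1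
  linarith

theorem viGap_convexComb_le (hG : IsSmoothConvexOn Z G DG L) (hZ : Convex ℝ Z)
    (hJ : ConvexOn ℝ Z J) (hH : ∀ v ∈ Z, ∀ x ∈ Z, 0 ≤ (H x - H v) (x - v))
    {x y z u : E} {a : ℝ} (ha : a ∈ Set.Icc 0 1) (hx : x ∈ Z) (hy : y ∈ Z) (hz : z ∈ Z)
    (hu : u ∈ Z) :
    viGap G H J ((1 - a) • x + a • y) u ≤ (1 - a) * viGap G H J x u
      + a * ((H y + DG ((1 - a) • x + a • z)) (y - u) + J y - J u
        + L * a / 2 * ‖y - z‖ ^ 2) := by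
  have hGle := hG.le_convexComb hZ ha hx hy hz hu
  have hJle : J ((1 - a) • x + a • y) ≤ (1 - a) * J x + a * J y :=
    hJ.2 hx hy (sub_nonneg.2 ha.2) ha.1 (sub_add_cancel 1 a)
  have hHeq : H u ((1 - a) • x + a • y - u) = (1 - a) * H u (x - u) + a * H u (y - u) := by
    simp only [map_add, map_sub, map_smul, smul_eq_mul]
    ring
  have hHle := mul_nonneg ha.1 (hH u hu y hy)
  rw [sub_apply] at hHle
  simp only [viGap, hHeq, add_apply]
  linarith

theorem add_mul_le_mul_of_recurrence {q v a b : ℕ → ℝ} {B : ℝ} (ha_one : a 1 = 1)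
    (ha : ∀ t ≥ 1, a t ≤ 1) (hb_one : 0 ≤ b 1) (hb : ∀ t ≥ 1, (1 - a (t + 1)) * b t ≤ b (t + 1))
    (hv : ∀ t ≥ 1, v t ≤ B)
    (hrec : ∀ t ≥ 1, q (t + 1) ≤ (1 - a t) * q t + b t * (v t - v (t + 1))) {t : ℕ} (ht : 1 ≤ t) :
    q (t + 1) + b t * v (t + 1) ≤ b t * B := by
  induction t, ht using Nat.le_induction with
  | base =>
    have hfirst := hrec 1 le_rfl
    rw [ha_one, sub_self, zero_mul, zero_add] at hfirst
    linarith [mul_le_mul_of_nonneg_left (hv 1 le_rfl) hb_one]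
  | succ t ht ih =>
    have ht' : 1 ≤ t + 1 := Nat.le_add_left 1 t
    have hih := mul_le_mul_of_nonneg_left ih (sub_nonneg.2 (ha (t + 1) ht'))
    have hslack := mul_le_mul_of_nonneg_right (hb t ht) (sub_nonneg.2 (hv (t + 1) ht'))
    linarith [hrec (t + 1) ht']

namespace IsAMPSequence

variable {α γ : ℕ → ℝ} {r w wag wmd : ℕ → E} {t : ℕ} {u : E}

theorem r_mem (hs : IsAMPSequence Z ω Dω J DG H α γ r w wag wmd) (ht : 1 ≤ t) : r t ∈ Z := by
  induction t, ht using Nat.le_induction with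
  | base => exact hs.r_one_mem
  | succ t ht _ => exact (hs.isProxPoint_r t ht).1

theorem wag_mem (hs : IsAMPSequence Z ω Dω J DG H α γ r w wag wmd) (hZ : Convex ℝ Z)
    (hα : ∀ t ≥ 1, α t ∈ Set.Icc 0 1) (ht : 1 ≤ t) : wag t ∈ Z := by
  induction t, ht using Nat.le_induction with
  | base => exact hs.wag_one ▸ hs.r_one_mem
  | succ t ht ih =>
    rw [hs.wag_succ t ht]
    exact hZ ih (hs.isProxPoint_w t ht).1 (sub_nonneg.2 (hα t ht).2) (hα t ht).1
      (sub_add_cancel 1 (α t))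

theorem viGap_wag_succ_le (hs : IsAMPSequence Z ω Dω J DG H α γ r w wag wmd) (hZ : Convex ℝ Z)
    (hμ : 0 < μ) (hω : IsDistanceGenerating Z ω Dω μ) (hJ : ConvexOn ℝ Z J)
    (hG : IsSmoothConvexOn Z G DG LG) (hHmono : ∀ v ∈ Z, ∀ x ∈ Z, 0 ≤ (H x - H v) (x - v))
    (hHlip : ∀ v ∈ Z, ∀ x ∈ Z, ‖H x - H v‖ ≤ LH * ‖x - v‖)
    (hα : ∀ t ≥ 1, α t ∈ Set.Icc 0 1) (ht : 1 ≤ t) (hγ : 0 < γ t)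
    (hstep : LG * α t * γ t + (γ t * LH) ^ 2 / μ ≤ μ) (hu : u ∈ Z) :
    viGap G H J (wag (t + 1)) u ≤ (1 - α t) * viGap G H J (wag t) u
      + α t / γ t * (bregmanDiv ω Dω (r t) u - bregmanDiv ω Dω (r (t + 1)) u) := by
  have hw := hs.isProxPoint_w t ht
  have hrt := hs.r_mem ht
  have hlip : ‖γ t • (H (w (t + 1)) + DG (wmd t)) - γ t • (H (r t) + DG (wmd t))‖
      ≤ γ t * LH * ‖w (t + 1) - r t‖ := by
    have hdiff : γ t • (H (w (t + 1)) + DG (wmd t)) - γ t • (H (r t) + DG (wmd t))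
        = γ t • (H (w (t + 1)) - H (r t)) := by module
    rw [hdiff, norm_smul, Real.norm_of_nonneg hγ.le, mul_assoc]
    exact mul_le_mul_of_nonneg_left (hHlip _ hrt _ hw.1) hγ.le
  have henergy := hw.extragradient_le_of_norm_sub_le (hJ.smul hγ.le) hω hμ hrt
    (hs.isProxPoint_r t ht) hu hlip
  have habsorb : LG * α t * γ t / 2 * ‖w (t + 1) - r t‖ ^ 2
      ≤ (μ - (γ t * LH) ^ 2 / μ) / 2 * ‖w (t + 1) - r t‖ ^ 2 := by
    gcongr
    linarith
  have hmodel : (H (w (t + 1)) + DG (wmd t)) (w (t + 1) - u) + J (w (t + 1)) - J u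
      + LG * α t / 2 * ‖w (t + 1) - r t‖ ^ 2
      ≤ (bregmanDiv ω Dω (r t) u - bregmanDiv ω Dω (r (t + 1)) u) / γ t := by
    rw [le_div_iff₀' hγ]
    simp only [smul_apply, smul_eq_mul] at henergy
    linarith
  rw [hs.wmd_eq t ht] at hmodel
  rw [hs.wag_succ t ht, div_mul_eq_mul_div, ← mul_div_assoc']
  refine (viGap_convexComb_le hG hZ hJ hHmono (hα t ht) (hs.wag_mem hZ hα ht) hw.1 hrt hu).trans ?_
  gcongr
  exact (hα t ht).1

theorem viGap_wag_succ_le_div_mul {B : ℝ} (hs : IsAMPSequence Z ω Dω J DG H α γ r w wag wmd)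
    (hZ : Convex ℝ Z) (hμ : 0 < μ) (hω : IsDistanceGenerating Z ω Dω μ) (hJ : ConvexOn ℝ Z J)
    (hG : IsSmoothConvexOn Z G DG LG) (hHmono : ∀ v ∈ Z, ∀ x ∈ Z, 0 ≤ (H x - H v) (x - v))
    (hHlip : ∀ v ∈ Z, ∀ x ∈ Z, ‖H x - H v‖ ≤ LH * ‖x - v‖)
    (hα : ∀ t ≥ 1, α t ∈ Set.Icc 0 1) (hγ : ∀ t ≥ 1, 0 < γ t) (hα_one : α 1 = 1)
    (hstep : ∀ t ≥ 1, LG * α t * γ t + (γ t * LH) ^ 2 / μ ≤ μ)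
    (hratio : ∀ t ≥ 1, (1 - α (t + 1)) * (α t / γ t) ≤ α (t + 1) / γ (t + 1))
    (hu : u ∈ Z) (hB : ∀ t ≥ 1, bregmanDiv ω Dω (r t) u ≤ B) (ht : 1 ≤ t) :
    viGap G H J (wag (t + 1)) u ≤ α t / γ t * B := by
  have hβ (t : ℕ) (ht : 1 ≤ t) : 0 ≤ α t / γ t := div_nonneg (hα t ht).1 (hγ t ht).le
  have hsum : viGap G H J (wag (t + 1)) u + α t / γ t * bregmanDiv ω Dω (r (t + 1)) u
      ≤ α t / γ t * B :=
    add_mul_le_mul_of_recurrence (q := fun t => viGap G H J (wag t) u)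
      (v := fun t => bregmanDiv ω Dω (r t) u) hα_one (fun t ht => (hα t ht).2) (hβ 1 le_rfl)
      hratio hB (fun t ht => hs.viGap_wag_succ_le hZ hμ hω hJ hG hHmono hHlip hα ht (hγ t ht)
        (hstep t ht) hu) ht
  have henergy : 0 ≤ α t / γ t * bregmanDiv ω Dω (r (t + 1)) u :=
    mul_nonneg (hβ t ht) (hω.bregmanDiv_nonneg hμ.le (hs.r_mem (Nat.le_add_left 1 t)) hu)
  linarith

end IsAMPSequence

/-- The averaging weight `α_t = 2 / (t + 1)` of the accelerated mirror-prox method. -/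
noncomputable def ampWeight (t : ℕ) : ℝ := 2 / (t + 1)

/-- The prox step size `γ_t = μ t / (2 (L_G + L_H t))` of the accelerated mirror-prox method. -/
noncomputable def ampStepSize (μ LG LH : ℝ) (t : ℕ) : ℝ := μ * t / (2 * (LG + LH * t))

section StepSizes

variable {t : ℕ}

theorem ampWeight_one : ampWeight 1 = 1 := by
  norm_num [ampWeight]

theorem ampWeight_mem_Icc (ht : 1 ≤ t) : ampWeight t ∈ Set.Icc 0 1 := by
  have ht' : (1 : ℝ) ≤ t := by exact_mod_cast ht
  exact ⟨by unfold ampWeight; positivity, (div_le_one (by positivity)).2 (by linarith)⟩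

theorem add_mul_natCast_pos (hLH : 0 ≤ LH) (hL : 0 < LG + LH) (ht : 1 ≤ t) :
    0 < LG + LH * t := by
  have ht' : (1 : ℝ) ≤ t := by exact_mod_cast ht
  linarith [le_mul_of_one_le_right hLH ht']

theorem ampStepSize_pos (hμ : 0 < μ) (hLH : 0 ≤ LH) (hL : 0 < LG + LH) (ht : 1 ≤ t) :
    0 < ampStepSize μ LG LH t := by
  have hD := add_mul_natCast_pos hLH hL ht
  unfold ampStepSize
  positivity

theorem ampWeight_div_ampStepSize (hμ : μ ≠ 0) (ht : t ≠ 0) :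
    ampWeight t / ampStepSize μ LG LH t
      = 4 * LG / (μ * t * (t + 1)) + 4 * LH / (μ * (t + 1)) := by
  rw [ampWeight, ampStepSize, div_div_eq_mul_div]
  field_simp
  ring

theorem ampWeight_mul_ampStepSize_add_sq_le (hμ : 0 < μ) (hLG : 0 ≤ LG) (hLH : 0 ≤ LH)
    (hL : 0 < LG + LH) (ht : 1 ≤ t) :
    LG * ampWeight t * ampStepSize μ LG LH t + (ampStepSize μ LG LH t * LH) ^ 2 / μ ≤ μ := by
  have hD := add_mul_natCast_pos hLH hL ht
  set s : ℝ := LH * t / (LG + LH * t) with hs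
  have hs_mem : s ∈ Set.Icc 0 1 := ⟨by positivity, (div_le_one hD).2 (by linarith)⟩
  have hs_compl : 1 - s = LG / (LG + LH * t) := by
    rw [hs, one_sub_div hD.ne', add_sub_cancel_right]
  have hsmooth : LG * ampWeight t * ampStepSize μ LG LH t = μ * (1 - s) * (t / (t + 1)) := by
    rw [ampWeight, ampStepSize, hs_compl]
    field_simp
  have hlip : (ampStepSize μ LG LH t * LH) ^ 2 / μ = μ * s ^ 2 / 4 := by
    rw [ampStepSize, hs]
    field_simp
    ring
  have hsmooth_le : μ * (1 - s) * (t / (t + 1)) ≤ μ * (1 - s) :=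
    mul_le_of_le_one_right (mul_nonneg hμ.le (sub_nonneg.2 hs_mem.2))
      ((div_le_one (by positivity)).2 (by linarith))
  have hlip_le : μ * s ^ 2 ≤ μ * s :=
    mul_le_mul_of_nonneg_left (pow_le_of_le_one hs_mem.1 hs_mem.2 two_ne_zero) hμ.le
  linarith [mul_nonneg hμ.le hs_mem.1]

theorem one_sub_ampWeight_mul_le (hμ : 0 < μ) (hLH : 0 ≤ LH) (ht : 1 ≤ t) :
    (1 - ampWeight (t + 1)) * (ampWeight t / ampStepSize μ LG LH t)
      ≤ ampWeight (t + 1) / ampStepSize μ LG LH (t + 1) := by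
  have : (0 : ℝ) < t := by exact_mod_cast ht
  have hleft : (1 - ampWeight (t + 1)) * (ampWeight t / ampStepSize μ LG LH t)
      = 4 * (LG + LH * t) / (μ * (t + 1) * (t + 2)) := by
    rw [ampWeight_div_ampStepSize hμ.ne' (by omega), ampWeight]
    push_cast
    field_simp
    ring
  have hright : ampWeight (t + 1) / ampStepSize μ LG LH (t + 1)
      = 4 * (LG + LH * (t + 1)) / (μ * (t + 1) * (t + 2)) := by
    rw [ampWeight_div_ampStepSize hμ.ne' (by omega)]
    push_cast
    field_simp
    ring
  rw [hleft, hright]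
  gcongr
  linarith

end StepSizes

theorem amp_rate_bounded_specific_steps_general
    (hZ : Convex ℝ Z) (hμ : 0 < μ) (hω : IsDistanceGenerating Z ω Dω μ) (hJ : ConvexOn ℝ Z J)
    (hG : IsSmoothConvexOn Z G DG LG) (hLG : 0 ≤ LG)
    (hHmono : ∀ v ∈ Z, ∀ x ∈ Z, 0 ≤ (H x - H v) (x - v))
    (hHlip : ∀ v ∈ Z, ∀ x ∈ Z, ‖H x - H v‖ ≤ LH * ‖x - v‖) (hLH : 0 ≤ LH)
    (hL : 0 < LG + LH) {α γ : ℕ → ℝ} {r w wag wmd : ℕ → E}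
    (hs : IsAMPSequence Z ω Dω J DG H α γ r w wag wmd)
    (hα : ∀ t ≥ 1, α t = ampWeight t) (hγ : ∀ t ≥ 1, γ t = ampStepSize μ LG LH t)
    {u : E} (hu : u ∈ Z) {B : ℝ} (hB : ∀ t ≥ 1, bregmanDiv ω Dω (r t) u ≤ B)
    {t : ℕ} (ht : 1 ≤ t) :
    viGap G H J (wag (t + 1)) u
      ≤ (4 * LG / (μ * t * (t + 1)) + 4 * LH / (μ * (t + 1))) * B := by
  rw [← ampWeight_div_ampStepSize hμ.ne' (by omega), ← hα t ht, ← hγ t ht]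
  refine hs.viGap_wag_succ_le_div_mul hZ hμ hω hJ hG hHmono hHlip
    (fun t ht => hα t ht ▸ ampWeight_mem_Icc ht)
    (fun t ht => hγ t ht ▸ ampStepSize_pos hμ hLH hL ht)
    (hα 1 le_rfl ▸ ampWeight_one) (fun t ht => ?_) (fun t ht => ?_) hu hB ht
  · rw [hα t ht, hγ t ht]
    exact ampWeight_mul_ampStepSize_add_sq_le hμ hLG hLH hL ht
  · rw [hα t ht, hγ t ht, hα (t + 1) (by omega), hγ (t + 1) (by omega)]
    exact one_sub_ampWeight_mul_le hμ hLH ht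

end AcceleratedMirrorProx

open Finset in
/-- rate of convergence of deterministic AMP with the specific stepsizes. -/
theorem amp_rate_bounded_specific_steps
    {E : Type*} [NormedAddCommGroup E] [NormedSpace ℝ E] [FiniteDimensional ℝ E]
    (Z : Set E) (hZne : Z.Nonempty) (hZcl : IsClosed Z) (hZcv : Convex ℝ Z)
    (μ : ℝ) (hμ : 0 < μ)
    (ω : E → ℝ) (Dω : E → E →L[ℝ] ℝ)
    (hωdiff : ∀ z ∈ Z, HasFDerivWithinAt ω (Dω z) Z z)
    (hωcont : ContinuousOn Dω Z)
    (hωsc : StrongConvexOn Z μ ω)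
    (V : E → E → ℝ) (hV : ∀ z u, V z u = ω u - ω z - Dω z (u - z))
    (hVlb : ∀ z ∈ Z, ∀ u ∈ Z, μ / 2 * ‖u - z‖ ^ 2 ≤ V z u)
    (J : E → ℝ) (hJ : ConvexOn ℝ Z J)
    (G : E → ℝ) (DG : E → E →L[ℝ] ℝ) (LG : ℝ) (hLG : 0 ≤ LG)
    (hGsmooth : ∀ v ∈ Z, ∀ x ∈ Z, G v ≤ G x + DG x (v - x) + LG / 2 * ‖v - x‖ ^ 2)
    (hGcvx : ∀ v ∈ Z, ∀ x ∈ Z, G x + DG x (v - x) ≤ G v)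
    (H : E → E →L[ℝ] ℝ) (LH : ℝ) (hLH : 0 ≤ LH)
    (hHmono : ∀ v ∈ Z, ∀ x ∈ Z, 0 ≤ (H x - H v) (x - v))
    (hHlip : ∀ v ∈ Z, ∀ x ∈ Z, ‖H x - H v‖ ≤ LH * ‖x - v‖)
    (Q : E → E → ℝ)
    (hQ : ∀ a b, Q a b = G a - G b + (H b) (a - b) + J a - J b)
    (α γ : ℕ → ℝ) (hαrange : ∀ t ≥ 1, 0 ≤ α t ∧ α t ≤ 1) (hγpos : ∀ t ≥ 1, 0 < γ t)
    (r w wag wmd : ℕ → E)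
    (hr1Z : r 1 ∈ Z) (hw1 : w 1 = r 1) (hwag1 : wag 1 = r 1)
    (hwmd : ∀ t ≥ 1, wmd t = (1 - α t) • wag t + α t • r t)
    (hwprox : ∀ t ≥ 1, w (t+1) ∈ Z ∧ IsMinOn
      (fun u => (γ t • (H (r t) + DG (wmd t))) (u - r t) + V (r t) u + γ t * J u) Z (w (t+1)))
    (hrprox : ∀ t ≥ 1, r (t+1) ∈ Z ∧ IsMinOn
      (fun u => (γ t • (H (w (t+1)) + DG (wmd t))) (u - r t) + V (r t) u + γ t * J u) Z (r (t+1)))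
    (hwagrec : ∀ t ≥ 1, wag (t+1) = (1 - α t) • wag t + α t • w (t+1))
    (hLHpos : 0 < LH)
    (ΩZ : ℝ) (hΩ : ∀ z₁ ∈ Z, ∀ z₂ ∈ Z, V z₁ z₂ ≤ ΩZ ^ 2)
    (hαdef : ∀ t ≥ 1, α t = 2 / ((t : ℝ) + 1))
    (hγdef : ∀ t ≥ 1, γ t = μ * (t : ℝ) / (2 * (LG + LH * (t : ℝ)))) :
    ∀ t ≥ 1, ∀ u ∈ Z,
      Q (wag (t+1)) u ≤
        (4 * LG / (μ * (t : ℝ) * ((t : ℝ) + 1)) + 4 * LH / (μ * (t : ℝ))) * ΩZ ^ 2 := by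
  intro t ht u hu
  obtain rfl : V = bregmanDiv ω Dω := funext₂ hV
  obtain rfl : Q = viGap G H J := funext₂ hQ
  have : (0 : ℝ) < t := by exact_mod_cast ht
  have hs : IsAMPSequence Z ω Dω J DG H α γ r w wag wmd :=
    ⟨hr1Z, hwag1, hwmd, hwprox, hrprox, hwagrec⟩
  exact (amp_rate_bounded_specific_steps_general hZcv hμ ⟨hωdiff, hVlb⟩ hJ ⟨hGcvx, hGsmooth⟩ hLG
    hHmono hHlip hLH (by positivity) hs hαdef hγdef hu (fun k hk => hΩ _ (hs.r_mem hk) u hu)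
    ht).trans (by gcongr; linarith)
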